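/- For every natural number N ≥ 1 and parameters α, β ≠ 0, τ with all denominators nonzero: F_N(α,β;τ) = (1-τ q^N) ∑_{n=0}^{N} [N choose n] (αq;q)_n (q;q)_n (ατq/β;q)_n (ατq^2;q)_{N-1} (τβ)^n q^{n^2} (1-ατ q^{2n+1}) / ((βq;q)_n (τ;q)_{n+1} (ατq^2;q)_{N+n}), where F_N(α,β;τ) := ∑_{n=0}^{N} [N choose n] (αq;q)_n (τ;q)_{N-n} (q;q)_n τ^n / ((βq;q)_n (τ;q)_N). (Finite analogue of the Rogers–Fine identity.) -/

import Mathlib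

open Finset

/-- q-Pochhammer symbol (a;q)_n = ∏_{k=0}^{n-1} (1 - a q^k). -/
noncomputable def qP (a q : ℂ) (n : ℕ) : ℂ := ∏ k ∈ Finset.range n, (1 - a * q ^ k)

/-- Gaussian (q-)binomial coefficient [N choose n]_q. -/
noncomputable def qBinom (q : ℂ) (N n : ℕ) : ℂ := qP q q N / (qP q q n * qP q q (N - n))

/-- Finite analogue of Fine's function. -/
noncomputable def fineN (q : ℂ) (N : ℕ) (a b t : ℂ) : ℂ :=
  ∑ n ∈ Finset.range (N + 1),
    qBinom q N n * (qP (a * q) q n * qP t q (N - n) * qP q q n * t ^ n /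
      (qP (b * q) q n * qP t q N))

theorem qP_succ_last (a q : ℂ) (n : ℕ) : qP a q (n + 1) = qP a q n * (1 - a * q ^ n) := by
  simp [qP, prod_range_succ]

theorem qP_succ_first (a q : ℂ) (n : ℕ) : qP a q (n + 1) = (1 - a) * qP (a * q) q n := by
  simp only [qP, prod_range_succ', pow_zero, mul_one, mul_comm _ (1 - a)]
  congr 1
  exact prod_congr rfl fun k _ => by ring

theorem qP_add (a q : ℂ) (m n : ℕ) : qP a q (m + n) = qP a q m * qP (a * q ^ m) q n := by
  simp only [qP, prod_range_add]
  congr 1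
  exact prod_congr rfl fun k _ => by ring

theorem qP_ne_zero {a q : ℂ} {n : ℕ} (h : ∀ k < n, 1 - a * q ^ k ≠ 0) : qP a q n ≠ 0 :=
  prod_ne_zero_iff.2 fun k hk => h k (mem_range.1 hk)

theorem qP_self_ne_zero {q : ℂ} {N n : ℕ} (hq : ∀ k, 1 ≤ k → k ≤ N → (1 : ℂ) - q ^ k ≠ 0)
    (hn : n ≤ N) : qP q q n ≠ 0 :=
  qP_ne_zero fun k hk => by
    rw [← pow_succ']
    exact hq (k + 1) (by omega) (by omega)

theorem qP_mul_self_ne_zero {b q : ℂ} {N n : ℕ}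
    (hb : ∀ k, 1 ≤ k → k ≤ N → 1 - b * q ^ k ≠ 0) (hn : n ≤ N) : qP (b * q) q n ≠ 0 :=
  qP_ne_zero fun k hk => by
    rw [mul_assoc, ← pow_succ']
    exact hb (k + 1) (by omega) (by omega)

/-- The summand of `fineN`. -/
noncomputable def fineTerm (q : ℂ) (N : ℕ) (a b t : ℂ) (n : ℕ) : ℂ :=
  qBinom q N n * (qP (a * q) q n * qP t q (N - n) * qP q q n * t ^ n /
    (qP (b * q) q n * qP t q N))

/-- The homogeneous product `∏_{k < n} (b - c q ^ k) = b ^ n (c / b; q)_n`. -/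
noncomputable def qPHom (b c q : ℂ) (n : ℕ) : ℂ := ∏ k ∈ range n, (b - c * q ^ k)

theorem qPHom_eq {b : ℂ} (hb : b ≠ 0) (c q : ℂ) (n : ℕ) :
    qPHom b c q n = qP (c / b) q n * b ^ n := by
  rw [qPHom, qP, ← card_range n, ← prod_const, card_range, ← prod_mul_distrib]
  exact prod_congr rfl fun k _ => by field_simp

theorem qPHom_succ_mul_pow (b c q : ℂ) (n : ℕ) :
    qPHom b c q (n + 1) * q ^ n = (b - c) * qPHom (b * q) (c * q ^ 2) q n := by
  simp only [qPHom, prod_range_succ', pow_zero, mul_one, mul_comm _ (b - c), mul_assoc]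
  congr 1
  nth_rw 2 [← card_range n]
  rw [← prod_const, ← prod_mul_distrib]
  exact prod_congr rfl fun k _ => by ring

/-- The summand on the right of the finite Rogers–Fine identity, with the common factors of
`(a t q ^ 2; q)_{N - 1}` and `(a t q ^ 2; q)_{N + n}` cancelled. -/
noncomputable def rogersFineTerm (q : ℂ) (N : ℕ) (a b t : ℂ) (n : ℕ) : ℂ :=
  qBinom q N n * (qP (a * q) q n * qP q q n * qPHom b (a * t * q) q n * t ^ n * q ^ (n ^ 2) *
    (1 - a * t * q ^ (2 * n + 1)) /
    (qP (b * q) q n * qP t q (n + 1) * qP (a * t * q ^ (N + 1)) q (n + 1)))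

theorem qBinom_mul_qP {q : ℂ} {N n : ℕ} (h : qP q q n ≠ 0) :
    qBinom q N n * qP q q n = qP q q N / qP q q (N - n) := by
  rw [qBinom]
  field_simp

theorem fineTerm_eq {q : ℂ} {N n : ℕ} (h : qP q q n ≠ 0) (a b t : ℂ) :
    fineTerm q N a b t n = qP q q N / qP q q (N - n) *
      (qP (a * q) q n * qP t q (N - n) * t ^ n / (qP (b * q) q n * qP t q N)) := by
  rw [← qBinom_mul_qP h, fineTerm]
  ring

theorem rogersFineTerm_eq {q : ℂ} {N n : ℕ} (h : qP q q n ≠ 0) (a b t : ℂ) :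
    rogersFineTerm q N a b t n = qP q q N / qP q q (N - n) *
      (qP (a * q) q n * qPHom b (a * t * q) q n * t ^ n * q ^ (n ^ 2) *
      (1 - a * t * q ^ (2 * n + 1)) /
      (qP (b * q) q n * qP t q (n + 1) * qP (a * t * q ^ (N + 1)) q (n + 1))) := by
  rw [← qBinom_mul_qP h, rogersFineTerm]
  ring

theorem fineTerm_zero {q : ℂ} {N : ℕ} {t : ℂ} (hq : qP q q N ≠ 0) (ht : qP t q N ≠ 0)
    (a b : ℂ) : fineTerm q N a b t 0 = 1 := by
  rw [fineTerm_eq (by simp [qP])]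
  simp [qP] at hq ht ⊢
  field_simp

theorem fineTerm_succ {q : ℂ} {N n : ℕ} {b t : ℂ} (hn : n < N)
    (hq : ∀ k, 1 ≤ k → k ≤ N → (1 : ℂ) - q ^ k ≠ 0)
    (ht : ∀ k, k ≤ N → 1 - t * q ^ k ≠ 0)
    (hb : ∀ k, 1 ≤ k → k ≤ N → 1 - b * q ^ k ≠ 0) (a : ℂ) :
    fineTerm q N a b t (n + 1) * ((1 - b * q ^ (n + 1)) * (1 - t * q ^ (N - (n + 1)))) =
      fineTerm q N a b t n * (t * (1 - q ^ (N - n)) * (1 - a * q ^ (n + 1))) := by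
  obtain ⟨k, rfl⟩ : ∃ k, N = n + 1 + k := ⟨N - (n + 1), by omega⟩
  rw [fineTerm_eq (qP_self_ne_zero hq (by omega)), fineTerm_eq (qP_self_ne_zero hq (by omega)),
    show n + 1 + k - (n + 1) = k by omega, show n + 1 + k - n = k + 1 by omega]
  have hk := qP_self_ne_zero hq (show k ≤ n + 1 + k by omega)
  have hq' := hq (k + 1) (by omega) (by omega)
  have hbn := qP_mul_self_ne_zero hb (show n ≤ n + 1 + k by omega)
  have hb' := hb (n + 1) (by omega) (by omega)
  have htN : qP t q (n + 1 + k) ≠ 0 := qP_ne_zero fun j hj => ht j hj.le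
  rw [qP_succ_last q, qP_succ_last (b * q), qP_succ_last (a * q), qP_succ_last t q k,
    mul_assoc b, mul_assoc a, ← pow_succ', ← pow_succ']
  generalize qP (b * q) q n = B at *
  generalize 1 - b * q ^ (n + 1) = b' at *
  field_simp
  ring

theorem fineTerm_shift {q : ℂ} {N n : ℕ} {b t : ℂ} (hn : n ≤ N)
    (hq : ∀ k, 1 ≤ k → k ≤ N + 1 → (1 : ℂ) - q ^ k ≠ 0)
    (ht : ∀ k, k ≤ N + 1 → 1 - t * q ^ k ≠ 0)
    (hb : ∀ k, 1 ≤ k → k ≤ N + 1 → 1 - b * q ^ k ≠ 0) (a : ℂ) :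
    (1 - b * q) * (fineTerm q (N + 1) a b t (n + 1) * (q ^ (n + 1) - t * q ^ (N + 1))) =
      t * q * (1 - a * q) * (1 - q ^ (N + 1)) *
        fineTerm q N (a * q) (b * q) (t * q) n := by
  obtain ⟨k, rfl⟩ := Nat.exists_eq_add_of_le hn
  rw [fineTerm_eq (qP_self_ne_zero hq (by omega)), fineTerm_eq (qP_self_ne_zero hq (by omega)),
    show n + k + 1 - (n + 1) = k by omega, show n + k - n = k by omega]
  have hk := qP_self_ne_zero hq (show k ≤ n + k + 1 by omega)
  have hbn := qP_mul_self_ne_zero hb (show n + 1 ≤ n + k + 1 by omega)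
  have htN : qP t q (n + k + 1) ≠ 0 := qP_ne_zero fun j hj => ht j hj.le
  have hshift : (1 - t) * qP (t * q) q k = qP t q k * (1 - t * q ^ k) := by
    rw [← qP_succ_first, qP_succ_last]
  rw [qP_succ_first] at hbn htN
  have hb1 := left_ne_zero_of_mul hbn
  have hb2 := right_ne_zero_of_mul hbn
  have ht1 := left_ne_zero_of_mul htN
  have ht2 := right_ne_zero_of_mul htN
  rw [qP_succ_last q, qP_succ_first (b * q), qP_succ_first (a * q), qP_succ_first t, ← pow_succ']
  generalize qP (b * q * q) q n = B at *
  generalize qP (a * q * q) q n = A at *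
  generalize qP (t * q) q (n + k) = T at *
  generalize qP (t * q) q k = U at *
  generalize qP t q k = V at *
  generalize 1 - b * q = b' at *
  generalize 1 - a * q = a' at *
  generalize 1 - q ^ (n + k + 1) = q' at *
  field_simp
  linear_combination (-qP q q (n + k) * q' * a' * A * t ^ (n + 1) * q ^ (n + 1)) * hshift

theorem sum_fineTerm_telescope {q : ℂ} {N : ℕ} {b t : ℂ}
    (hq : ∀ k, 1 ≤ k → k ≤ N → (1 : ℂ) - q ^ k ≠ 0)
    (ht : ∀ k, k ≤ N → 1 - t * q ^ k ≠ 0)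
    (hb : ∀ k, 1 ≤ k → k ≤ N → 1 - b * q ^ k ≠ 0) (a : ℂ) {m : ℕ} (hm : m ≤ N) :
    ∑ n ∈ range m, fineTerm q N a b t (n + 1) * ((1 - t) * (1 - a * t * q ^ (N + 1)) -
        (b - a * t * q) * (q ^ (n + 1) - t * q ^ N)) =
      fineTerm q N a b t 0 * (t * (1 - q ^ N) * (1 - a * q)) -
        fineTerm q N a b t m * (t * (1 - q ^ (N - m)) * (1 - a * q ^ (m + 1))) := by
  induction m with
  | zero => simp
  | succ m ih =>
    rw [sum_range_succ, ih (by omega), ← fineTerm_succ (by omega) hq ht hb]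
    obtain ⟨k, rfl⟩ : ∃ k, N = m + 1 + k := ⟨N - (m + 1), by omega⟩
    rw [show m + 1 + k - (m + 1) = k by omega]
    ring

theorem fineN_recurrence {q : ℂ} {N : ℕ} {b t : ℂ}
    (hq : ∀ k, 1 ≤ k → k ≤ N + 1 → (1 : ℂ) - q ^ k ≠ 0)
    (ht : ∀ k, k ≤ N + 1 → 1 - t * q ^ k ≠ 0)
    (hb : ∀ k, 1 ≤ k → k ≤ N + 1 → 1 - b * q ^ k ≠ 0) (a : ℂ) :
    (1 - b * q) * ((1 - t) * (1 - a * t * q ^ (N + 2)) * fineN q (N + 1) a b t) =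
      (1 - b * q) * ((1 - t * q ^ (N + 1)) * (1 - a * t * q)) +
        (b - a * t * q) * (t * q * (1 - a * q) * (1 - q ^ (N + 1))) *
          fineN q N (a * q) (b * q) (t * q) := by
  have hsum : fineN q (N + 1) a b t =
      ∑ n ∈ range (N + 1), fineTerm q (N + 1) a b t (n + 1) + 1 := by
    rw [← fineTerm_zero (qP_self_ne_zero hq le_rfl) (qP_ne_zero fun j hj => ht j hj.le) a b,
      ← sum_range_succ']
    rfl
  have hshift : (1 - b * q) * ∑ n ∈ range (N + 1),
      fineTerm q (N + 1) a b t (n + 1) * (q ^ (n + 1) - t * q ^ (N + 1)) =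
      t * q * (1 - a * q) * (1 - q ^ (N + 1)) * fineN q N (a * q) (b * q) (t * q) := by
    rw [mul_sum, fineN, mul_sum]
    exact sum_congr rfl fun n hn =>
      fineTerm_shift (Nat.lt_succ_iff.1 (mem_range.1 hn)) hq ht hb a
  have htel := sum_fineTerm_telescope hq ht hb a le_rfl
  rw [fineTerm_zero (qP_self_ne_zero hq le_rfl) (qP_ne_zero fun j hj => ht j hj.le)] at htel
  have hsplit : ∀ (f g : ℕ → ℂ) (c d : ℂ), ∑ n ∈ range (N + 1), f n * (c - d * g n) =
      c * ∑ n ∈ range (N + 1), f n - d * ∑ n ∈ range (N + 1), f n * g n := fun f g c d => by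
    rw [mul_sum, mul_sum, ← sum_sub_distrib]
    exact sum_congr rfl fun n _ => by ring
  rw [hsplit (fun n => fineTerm q (N + 1) a b t (n + 1))
    (fun n => q ^ (n + 1) - t * q ^ (N + 1)), Nat.sub_self, pow_zero] at htel
  rw [hsum]
  linear_combination (1 - b * q) * htel + (b - a * t * q) * hshift

theorem rogersFineTerm_shift {q : ℂ} {N n : ℕ} {a b t : ℂ} (hn : n ≤ N)
    (hq : ∀ k, 1 ≤ k → k ≤ N + 1 → (1 : ℂ) - q ^ k ≠ 0)
    (ht : ∀ k, k ≤ N + 1 → 1 - t * q ^ k ≠ 0)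
    (hb : ∀ k, 1 ≤ k → k ≤ N + 1 → 1 - b * q ^ k ≠ 0)
    (hat : ∀ k, k ≤ N + 1 → 1 - a * t * q ^ (N + 2) * q ^ k ≠ 0) :
    (1 - b * q) * ((1 - t) * (1 - a * t * q ^ (N + 2)) * rogersFineTerm q (N + 1) a b t (n + 1)) =
      (b - a * t * q) * (t * q * (1 - a * q) * (1 - q ^ (N + 1))) *
        rogersFineTerm q N (a * q) (b * q) (t * q) n := by
  rw [rogersFineTerm_eq (qP_self_ne_zero hq (by omega)),
    rogersFineTerm_eq (qP_self_ne_zero hq (by omega)), Nat.add_sub_add_right]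
  have hk := qP_self_ne_zero hq (show N - n ≤ N + 1 by omega)
  have hbn := qP_mul_self_ne_zero hb (show n + 1 ≤ N + 1 by omega)
  have htn : qP t q (n + 1 + 1) ≠ 0 := qP_ne_zero fun j hj => ht j (by omega)
  have hatn : qP (a * t * q ^ (N + 2)) q (n + 1 + 1) ≠ 0 :=
    qP_ne_zero fun j hj => hat j (by omega)
  have hhom := qPHom_succ_mul_pow b (a * t * q) q n
  rw [show a * t * q * q ^ 2 = a * q * (t * q) * q by ring] at hhom
  rw [qP_succ_first] at hbn htn hatn
  rw [show a * t * q ^ (N + 2) * q = a * q * (t * q) * q ^ (N + 1) by ring] at hatn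
  have hb1 := left_ne_zero_of_mul hbn
  have hb2 := right_ne_zero_of_mul hbn
  have ht1 := left_ne_zero_of_mul htn
  have ht2 := right_ne_zero_of_mul htn
  have hat1 := left_ne_zero_of_mul hatn
  have hat2 := right_ne_zero_of_mul hatn
  rw [qP_succ_last q, qP_succ_first (b * q), qP_succ_first (a * q), qP_succ_first t,
    show N + 1 + 1 = N + 2 from rfl, qP_succ_first (a * t * q ^ (N + 2)),
    show a * t * q ^ (N + 2) * q = a * q * (t * q) * q ^ (N + 1) by ring]
  generalize qP (a * q * (t * q) * q ^ (N + 1)) q (n + 1) = X at *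
  generalize qP (t * q) q (n + 1) = Y at *
  generalize qP (b * q * q) q n = Z at *
  generalize qPHom b (a * t * q) q (n + 1) = U at *
  generalize qPHom (b * q) (a * q * (t * q) * q) q n = V at *
  generalize qP q q (N - n) = R at *
  generalize 1 - b * q = b' at *
  generalize 1 - a * t * q ^ (N + 2) = c' at *
  generalize qP (a * q * q) q n = A at *
  generalize 1 - t = t' at *
  field_simp
  linear_combination (q ^ (n + 1) * q ^ (n ^ 2) * t ^ (n + 1) * qP q q N * A * (1 - q ^ (N + 1)) *
    (1 - a * q) * (1 - a * t * q ^ (2 * n + 3))) * hhom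

theorem rogersFineTerm_zero {q : ℂ} {N : ℕ} (hq : qP q q N ≠ 0) (a b t : ℂ) :
    rogersFineTerm q N a b t 0 =
      (1 - a * t * q) / ((1 - t) * (1 - a * t * q ^ (N + 1))) := by
  rw [rogersFineTerm_eq (by simp [qP])]
  simp [qP, qPHom] at hq ⊢
  rw [div_self hq, one_mul]

theorem fineN_eq_sum_rogersFineTerm {q : ℂ} (N : ℕ) {a b t : ℂ}
    (hq : ∀ k, 1 ≤ k → k ≤ N → (1 : ℂ) - q ^ k ≠ 0)
    (ht : ∀ k, k ≤ N → 1 - t * q ^ k ≠ 0)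
    (hb : ∀ k, 1 ≤ k → k ≤ N → 1 - b * q ^ k ≠ 0)
    (hat : ∀ k, k ≤ N → 1 - a * t * q ^ (N + 1) * q ^ k ≠ 0) :
    fineN q N a b t = (1 - t * q ^ N) * ∑ n ∈ range (N + 1), rogersFineTerm q N a b t n := by
  induction N generalizing a b t with
  | zero =>
    have h1 := ht 0 le_rfl
    have h2 := hat 0 le_rfl
    simp only [pow_zero, mul_one, zero_add, pow_one] at h1 h2
    simp only [zero_add, range_one, sum_singleton, pow_zero, mul_one]
    rw [rogersFineTerm_zero (by simp [qP])]
    simp only [zero_add, pow_one, mul_div_assoc']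
    rw [div_self (mul_ne_zero h1 h2)]
    simp [fineN, qBinom, qP]
  | succ N ih =>
    have hbq : 1 - b * q ≠ 0 := by simpa using hb 1 le_rfl (by omega)
    have ht0 : 1 - t ≠ 0 := by simpa using ht 0 (by omega)
    have hat0 : 1 - a * t * q ^ (N + 2) ≠ 0 := by simpa using hat 0 (by omega)
    have hrec := fineN_recurrence hq ht hb a
    rw [ih (a := a * q) (b := b * q) (t := t * q) (fun k h1 h2 => hq k h1 (by omega))
      (fun k hk => by
        have := ht (k + 1) (by omega)
        rwa [pow_succ', ← mul_assoc] at this)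
      (fun k h1 h2 => by
        have := hb (k + 1) (by omega) (by omega)
        rwa [pow_succ', ← mul_assoc] at this)
      (fun k hk => by
        have := hat (k + 1) (by omega)
        convert this using 2
        ring)] at hrec
    have hshift : (1 - b * q) * ((1 - t) * (1 - a * t * q ^ (N + 2)) *
        ∑ n ∈ range (N + 1), rogersFineTerm q (N + 1) a b t (n + 1)) =
        (b - a * t * q) * (t * q * (1 - a * q) * (1 - q ^ (N + 1))) *
        ∑ n ∈ range (N + 1), rogersFineTerm q N (a * q) (b * q) (t * q) n := by
      simp only [mul_sum]
      exact sum_congr rfl fun n hn =>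
        rogersFineTerm_shift (Nat.lt_succ_iff.1 (mem_range.1 hn)) hq ht hb hat
    have hzero : (1 - t) * (1 - a * t * q ^ (N + 2)) * rogersFineTerm q (N + 1) a b t 0 =
        1 - a * t * q := by
      rw [rogersFineTerm_zero (qP_self_ne_zero hq le_rfl)]
      exact mul_div_cancel₀ _ (mul_ne_zero ht0 hat0)
    rw [sum_range_succ']
    refine mul_left_cancel₀ (mul_ne_zero hbq (mul_ne_zero ht0 hat0)) ?_
    linear_combination hrec - (1 - t * q ^ (N + 1)) * hshift -
      (1 - b * q) * (1 - t * q ^ (N + 1)) * hzero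

/-- Finite analogue of the Rogers–Fine identity. -/
theorem stmt_17 (N : ℕ) (hN : 1 ≤ N) (q α β τ : ℂ) (hβ : β ≠ 0)
    (hq : ∀ n, 1 ≤ n → n ≤ N → (1 : ℂ) - q ^ n ≠ 0)
    (hτ : ∀ n, n ≤ N → 1 - τ * q ^ n ≠ 0)
    (hb : ∀ n, 1 ≤ n → n ≤ N → 1 - β * q ^ n ≠ 0)
    (hατ : ∀ n, n ≤ 2 * N → 1 - α * τ * q ^ 2 * q ^ n ≠ 0) :
    fineN q N α β τ =
      (1 - τ * q ^ N) *
        ∑ n ∈ Finset.range (N + 1),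
          qBinom q N n * (qP (α * q) q n * qP q q n * qP (α * τ * q / β) q n *
            qP (α * τ * q ^ 2) q (N - 1) * (τ * β) ^ n * q ^ (n ^ 2) *
            (1 - α * τ * q ^ (2 * n + 1)) /
            (qP (β * q) q n * qP τ q (n + 1) * qP (α * τ * q ^ 2) q (N + n))) := by
  obtain ⟨M, rfl⟩ := Nat.exists_eq_add_of_le' hN
  rw [fineN_eq_sum_rogersFineTerm (M + 1) hq hτ hb fun k hk => by
    convert hατ (M + k) (by omega) using 2
    ring]
  congr 1
  refine sum_congr rfl fun n hn => ?_
  have hM : qP (α * τ * q ^ 2) q M ≠ 0 := qP_ne_zero fun k hk => hατ k (by omega)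
  rw [rogersFineTerm, qPHom_eq hβ, Nat.add_sub_cancel, show M + 1 + n = M + (n + 1) by ring,
    qP_add _ _ M, show α * τ * q ^ 2 * q ^ M = α * τ * q ^ (M + 1 + 1) by ring, mul_pow,
    mul_left_comm _ (qP (α * τ * q ^ 2) q M), ← mul_div_mul_left _ _ hM]
  congr 2
  ring
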